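/- Consider a two-player zero-sum robust matrix game with nominal payoff r* ∈ ℝ^{𝒜_1×𝒜_2} and nonempty uncertainty sets ℛ_1, ℛ_2 ⊆ ℝ^{𝒜_1×𝒜_2} whose support functions are finite and player-decomposable on the simplices: there exist functions Ω_1 : Δ(𝒜_1) → ℝ, Ω_2 : Δ(𝒜_2) → ℝ, g_1 : Δ(𝒜_2) → ℝ, g_2 : Δ(𝒜_1) → ℝ such that σ_{ℛ_1}(−π_1π_2ᵀ) = Ω_1(π_1) + g_1(π_2) and σ_{ℛ_2}(−π_1π_2ᵀ) = Ω_2(π_2) + g_2(π_1) for all (π_1, π_2) ∈ Δ(𝒜_1)×Δ(𝒜_2). Define the zero-sum regularized payoff f(π_1, π_2) = π_1ᵀ r* π_2 − Ω_1(π_1) + Ω_2(π_2). Then for every (π_1, π_2), the robust suboptimality gap equals the duality gap of f: [max_{π_1'} V_1(π_1',π_2) − V_1(π_1,π_2)] + [max_{π_2'} V_2(π_1,π_2') − V_2(π_1,π_2)] = max_{π_1'∈Δ(𝒜_1)} f(π_1', π_2) − min_{π_2'∈Δ(𝒜_2)} f(π_1, π_2'). In particular, (π_1,π_2) is a robust Nash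 equilibrium if and only if f(π_1,π_2) = max_{π_1'} f(π_1',π_2) = min_{π_2'} f(π_1,π_2'). -/

import Mathlib

/-!
Writing the infimum defining a robust value as the negative of a supremum gives
`V_1(u, v) = uᵀ r* v − σ_{ℛ_1}(−uvᵀ)`, and likewise for player 2 with payoff `−r*`
(`isGLB_bil_add`). With the decomposition of the support functions this reads
`V_1(u, π_2) = f(u, π_2) − (Ω_2(π_2) + g_1(π_2))` and
`V_2(π_1, u) = −f(π_1, u) − (Ω_1(π_1) + g_2(π_1))`, so each robust value is, as a function of
the player's own policy, a translate of `f` or of `−f`. Suprema commute with translations, and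
both claims follow.

For real-valued `sSup` this last step needs boundedness: the robust value is at most the payoff
under any single element of the uncertainty set, which is bounded on the simplices (`bil_le`).
-/

open scoped BigOperators

/-- The probability simplex `Δ(T)` over a finite set `T`. -/
def probSimplex (T : Type*) [Fintype T] : Set (T → ℝ) :=
  {x | (∀ t, 0 ≤ x t) ∧ ∑ t, x t = 1}

/-- The bilinear form `π_1ᵀ M π_2 = Σ_{a_1,a_2} π_1(a_1) M(a_1,a_2) π_2(a_2)`. -/
noncomputable def bil {A1 A2 : Type*} [Fintype A1] [Fintype A2]
    (M : Matrix A1 A2 ℝ) (π1 : A1 → ℝ) (π2 : A2 → ℝ) : ℝ :=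
  ∑ a1, ∑ a2, π1 a1 * M a1 a2 * π2 a2

/-- Player 1's robust value in the two-player zero-sum robust matrix game:
`V_1(π_1,π_2) = inf_{x ∈ ℛ_1} π_1ᵀ (r* + x) π_2`. -/
noncomputable def V1 {A1 A2 : Type*} [Fintype A1] [Fintype A2]
    (rstar : Matrix A1 A2 ℝ) (R1 : Set (Matrix A1 A2 ℝ))
    (π1 : A1 → ℝ) (π2 : A2 → ℝ) : ℝ :=
  sInf {t : ℝ | ∃ x ∈ R1, t = bil (rstar + x) π1 π2}

/-- Player 2's robust value in the two-player zero-sum robust matrix game: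
`V_2(π_1,π_2) = inf_{x ∈ ℛ_2} π_1ᵀ (−r* + x) π_2`. -/
noncomputable def V2 {A1 A2 : Type*} [Fintype A1] [Fintype A2]
    (rstar : Matrix A1 A2 ℝ) (R2 : Set (Matrix A1 A2 ℝ))
    (π1 : A1 → ℝ) (π2 : A2 → ℝ) : ℝ :=
  sInf {t : ℝ | ∃ x ∈ R2, t = bil (-rstar + x) π1 π2}

lemma bil_add {A1 A2 : Type*} [Fintype A1] [Fintype A2]
    (M N : Matrix A1 A2 ℝ) (u : A1 → ℝ) (v : A2 → ℝ) :
    bil (M + N) u v = bil M u v + bil N u v := by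
  simp only [bil, Matrix.add_apply, mul_add, add_mul, Finset.sum_add_distrib]

lemma bil_neg {A1 A2 : Type*} [Fintype A1] [Fintype A2]
    (M : Matrix A1 A2 ℝ) (u : A1 → ℝ) (v : A2 → ℝ) :
    bil (-M) u v = -bil M u v := by
  simp [bil]

lemma probSimplex_le_one {T : Type*} [Fintype T] {x : T → ℝ} (hx : x ∈ probSimplex T) (t : T) :
    x t ≤ 1 :=
  hx.2 ▸ Finset.single_le_sum (fun i _ => hx.1 i) (Finset.mem_univ t)

lemma bil_le {A1 A2 : Type*} [Fintype A1] [Fintype A2]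
    (M : Matrix A1 A2 ℝ) {u : A1 → ℝ} {v : A2 → ℝ}
    (hu : u ∈ probSimplex A1) (hv : v ∈ probSimplex A2) :
    bil M u v ≤ ∑ a1, ∑ a2, |M a1 a2| := by
  refine Finset.sum_le_sum fun a _ => Finset.sum_le_sum fun b _ => ?_
  have h : u a * v b ≤ 1 :=
    mul_le_one₀ (probSimplex_le_one hu a) (hv.1 b) (probSimplex_le_one hv b)
  calc u a * M a b * v b = (u a * v b) * M a b := by ring
    _ ≤ (u a * v b) * |M a b| :=
      mul_le_mul_of_nonneg_left (le_abs_self _) (mul_nonneg (hu.1 a) (hv.1 b))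
    _ ≤ 1 * |M a b| := mul_le_mul_of_nonneg_right h (abs_nonneg _)
    _ = |M a b| := one_mul _

/-- The robust value is the nominal payoff minus the support function of the uncertainty set at
`−uvᵀ`. Finiteness of the latter makes the infimum a genuine greatest lower bound. -/
lemma isGLB_bil_add {A1 A2 : Type*} [Fintype A1] [Fintype A2]
    (r : Matrix A1 A2 ℝ) {R : Set (Matrix A1 A2 ℝ)} (hR : R.Nonempty)
    {u : A1 → ℝ} {v : A2 → ℝ} (hb : BddAbove {t : ℝ | ∃ x ∈ R, t = -bil x u v}) :
    IsGLB {t : ℝ | ∃ x ∈ R, t = bil (r + x) u v}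
      (bil r u v - sSup {t : ℝ | ∃ x ∈ R, t = -bil x u v}) := by
  obtain ⟨x₀, hx₀⟩ := hR
  have hlub : IsLUB {t : ℝ | ∃ x ∈ R, t = -bil x u v} _ :=
    isLUB_csSup ⟨_, x₀, hx₀, rfl⟩ hb
  constructor
  · rintro _ ⟨x, hx, rfl⟩
    have := hlub.1 ⟨x, hx, rfl⟩
    rw [bil_add]
    linarith
  · intro c hc
    have : sSup {t : ℝ | ∃ x ∈ R, t = -bil x u v} ≤ bil r u v - c := by
      refine hlub.2 ?_
      rintro _ ⟨x, hx, rfl⟩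
      have := hc ⟨x, hx, rfl⟩
      rw [bil_add] at this
      linarith
    linarith

/-- Translation of a supremum. The bound on `F` is what rules out the junk value of `sSup`. -/
lemma sSup_translate {T : Type*} {S : Set T} (hS : S.Nonempty) {F G : T → ℝ} {c : ℝ}
    (hb : BddAbove {t : ℝ | ∃ u ∈ S, t = F u}) (hFG : ∀ u ∈ S, F u = G u - c) :
    sSup {t : ℝ | ∃ u ∈ S, t = F u} = sSup {t : ℝ | ∃ u ∈ S, t = G u} - c := by
  obtain ⟨u₀, hu₀⟩ := hS
  have hlub : IsLUB {t : ℝ | ∃ u ∈ S, t = F u} _ :=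
    isLUB_csSup ⟨_, u₀, hu₀, rfl⟩ hb
  have hG : IsLUB {t : ℝ | ∃ u ∈ S, t = G u} (sSup {t : ℝ | ∃ u ∈ S, t = F u} + c) := by
    constructor
    · rintro _ ⟨u, hu, rfl⟩
      have := hlub.1 ⟨u, hu, rfl⟩
      have := hFG u hu
      linarith
    · intro b hb'
      have : sSup {t : ℝ | ∃ u ∈ S, t = F u} ≤ b - c := by
        refine hlub.2 ?_
        rintro _ ⟨u, hu, rfl⟩
        have := hb' ⟨u, hu, rfl⟩
        have := hFG u hu
        linarith
      linarith
  rw [hG.csSup_eq ⟨_, u₀, hu₀, rfl⟩]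
  ring

lemma sSup_neg_eq {T : Type*} (S : Set T) (G : T → ℝ) :
    sSup {t : ℝ | ∃ u ∈ S, t = -G u} = -sInf {t : ℝ | ∃ u ∈ S, t = G u} := by
  rw [Real.sInf_def, neg_neg]
  congr 1
  ext t
  simp [neg_eq_iff_eq_neg]

/-- Theorem (player-decomposable uncertainty gives a zero-sum regularized
game): if the support functions of `ℛ_1, ℛ_2` are finite and decompose as
`σ_{ℛ_1}(−π_1π_2ᵀ) = Ω_1(π_1) + g_1(π_2)` and
`σ_{ℛ_2}(−π_1π_2ᵀ) = Ω_2(π_2) + g_2(π_1)` on the simplices, then with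
`f(π_1,π_2) = π_1ᵀ r* π_2 − Ω_1(π_1) + Ω_2(π_2)`, the robust suboptimality
gap equals the duality gap of `f`, and `(π_1,π_2)` is a robust Nash
equilibrium iff `f(π_1,π_2) = max_{π_1'} f(π_1',π_2) = min_{π_2'} f(π_1,π_2')`. -/
theorem decomposable_zero_sum_equiv {A1 A2 : Type*} [Fintype A1] [Fintype A2]
    (rstar : Matrix A1 A2 ℝ) (R1 R2 : Set (Matrix A1 A2 ℝ))
    (hR1ne : R1.Nonempty) (hR2ne : R2.Nonempty)
    (Ω1 g2 : (A1 → ℝ) → ℝ) (Ω2 g1 : (A2 → ℝ) → ℝ)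
    (hb1 : ∀ π1 ∈ probSimplex A1, ∀ π2 ∈ probSimplex A2,
      BddAbove {t : ℝ | ∃ x ∈ R1, t = -bil x π1 π2})
    (hb2 : ∀ π1 ∈ probSimplex A1, ∀ π2 ∈ probSimplex A2,
      BddAbove {t : ℝ | ∃ x ∈ R2, t = -bil x π1 π2})
    (hd1 : ∀ π1 ∈ probSimplex A1, ∀ π2 ∈ probSimplex A2,
      sSup {t : ℝ | ∃ x ∈ R1, t = -bil x π1 π2} = Ω1 π1 + g1 π2)
    (hd2 : ∀ π1 ∈ probSimplex A1, ∀ π2 ∈ probSimplex A2,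
      sSup {t : ℝ | ∃ x ∈ R2, t = -bil x π1 π2} = Ω2 π2 + g2 π1)
    (f : (A1 → ℝ) → (A2 → ℝ) → ℝ)
    (hf : ∀ π1 π2, f π1 π2 = bil rstar π1 π2 - Ω1 π1 + Ω2 π2)
    (π1 : A1 → ℝ) (π2 : A2 → ℝ)
    (hπ1 : π1 ∈ probSimplex A1) (hπ2 : π2 ∈ probSimplex A2) :
    ((sSup {t : ℝ | ∃ u ∈ probSimplex A1, t = V1 rstar R1 u π2}
        - V1 rstar R1 π1 π2)
      + (sSup {t : ℝ | ∃ u ∈ probSimplex A2, t = V2 rstar R2 π1 u}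
        - V2 rstar R2 π1 π2)
      = sSup {t : ℝ | ∃ u ∈ probSimplex A1, t = f u π2}
        - sInf {t : ℝ | ∃ u ∈ probSimplex A2, t = f π1 u}) ∧
    ((V1 rstar R1 π1 π2
        = sSup {t : ℝ | ∃ u ∈ probSimplex A1, t = V1 rstar R1 u π2} ∧
      V2 rstar R2 π1 π2
        = sSup {t : ℝ | ∃ u ∈ probSimplex A2, t = V2 rstar R2 π1 u}) ↔
     (f π1 π2 = sSup {t : ℝ | ∃ u ∈ probSimplex A1, t = f u π2} ∧
      f π1 π2 = sInf {t : ℝ | ∃ u ∈ probSimplex A2, t = f π1 u})) := by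
  have glb1 := fun u hu => isGLB_bil_add rstar hR1ne (hb1 u hu π2 hπ2)
  have glb2 := fun u hu => isGLB_bil_add (-rstar) hR2ne (hb2 π1 hπ1 u hu)
  have hV1 : ∀ u ∈ probSimplex A1, V1 rstar R1 u π2 = f u π2 - (Ω2 π2 + g1 π2) := by
    intro u hu
    obtain ⟨x, hx⟩ := hR1ne
    rw [V1, (glb1 u hu).csInf_eq ⟨_, x, hx, rfl⟩, hd1 u hu π2 hπ2, hf]
    ring
  have hV2 : ∀ u ∈ probSimplex A2, V2 rstar R2 π1 u = -f π1 u - (Ω1 π1 + g2 π1) := by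
    intro u hu
    obtain ⟨x, hx⟩ := hR2ne
    rw [V2, (glb2 u hu).csInf_eq ⟨_, x, hx, rfl⟩, hd2 π1 hπ1 u hu, hf, bil_neg]
    ring
  -- A fixed element of each uncertainty set dominates the robust value uniformly on the simplex.
  have bdd1 : BddAbove {t : ℝ | ∃ u ∈ probSimplex A1, t = V1 rstar R1 u π2} := by
    obtain ⟨x, hx⟩ := hR1ne
    refine ⟨∑ a1, ∑ a2, |(rstar + x) a1 a2|, ?_⟩
    rintro _ ⟨u, hu, rfl⟩
    exact (csInf_le ⟨_, (glb1 u hu).1⟩ ⟨x, hx, rfl⟩).trans (bil_le _ hu hπ2)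
  have bdd2 : BddAbove {t : ℝ | ∃ u ∈ probSimplex A2, t = V2 rstar R2 π1 u} := by
    obtain ⟨x, hx⟩ := hR2ne
    refine ⟨∑ a1, ∑ a2, |(-rstar + x) a1 a2|, ?_⟩
    rintro _ ⟨u, hu, rfl⟩
    exact (csInf_le ⟨_, (glb2 u hu).1⟩ ⟨x, hx, rfl⟩).trans (bil_le _ hπ1 hu)
  rw [sSup_translate ⟨π1, hπ1⟩ bdd1 hV1, sSup_translate ⟨π2, hπ2⟩ bdd2 hV2, sSup_neg_eq,
    hV1 π1 hπ1, hV2 π2 hπ2]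
  refine ⟨by ring, ?_⟩
  constructor <;> rintro ⟨h1, h2⟩ <;> constructor <;> linarith
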